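/- For all A, y ∈ ℝ the limit E^cg(A,y) = lim_{N→∞} E_N^cg(A,y) exists and equals (A − y)·W'(A) + A·H + inf{ J_∞(A;v) : v' ∈ ℓ² }, where J_∞(A;v) = ∑_{i=2}^∞ [ W(A + v'_i) − W(A) − W'(A)·v'_i + h_i·v'_i ]; moreover there is a constant C > 0 such that for all N ≥ 2, |E_N^cg(A,y) − E^cg(A,y)| ≤ C·( N^{−1} + |A|·|∑_{i=N+1}^∞ h_i| + ∑_{i=N+1}^∞ h_i² ). -/

import Mathlib

/-!
The Legendre transform exchanges the two-sided quadratic bounds with constants `(a, b)` and those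
with constants `(b⁻¹, a⁻¹)`. Integration by parts against the Gibbs measure of `ψ`, with mean `c`,
shows that `(ψ' y - ψ' c) * (y - c)` has expectation `1`, so the variance of the measure lies
between `κ₂⁻¹` and `κ₁⁻¹`. This variance, with `ψ` tilted by a force, is the second derivative of
the logarithmic partition function, whose Legendre transform `W` therefore inherits the bounds
`κ₁`, `κ₂` of `ψ`.

In terms of the increments `A + v j`, the energy of a finite chain is a constant plus a sum of
decoupled bond energies, and the boundary conditions leave the single constraint `∑ v j = A - y`.
Each bond energy has a minimiser `w j` of size at most `|h (j + 2)| / κ₁`, and the minimal values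
add up to the infimum of `J_∞`. Dropping the constraint bounds the energy of the chain from below;
correcting each `w j` by the same amount to satisfy it costs only `O(N⁻¹)`, since `w` is summable.
What remains are the tails of the series, where the minimal bond energies are quadratic in `h`.
-/

noncomputable section

open MeasureTheory Real Filter

/-- The Cauchy–Born strain energy `W(A)`. -/
def W (ψ : ℝ → ℝ) (A : ℝ) : ℝ :=
  ⨆ σ : ℝ, (σ * A - Real.log (∫ y : ℝ, Real.exp (-ψ y + σ * y)))

/-- The finite-domain coarse-grained energy with external forces:
`E_N^cg(A,y) = inf { ∑_{i=2}^N [Wf(u_i - u_{i-1}) - Wf(A) + h_i (u_i - u_{i-1})] :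
u₁ = y, u_N = N A }`. -/
def EcgNF (Wf : ℝ → ℝ) (h : ℕ → ℝ) (N : ℕ) (A y : ℝ) : ℝ :=
  sInf { E : ℝ | ∃ u : ℕ → ℝ, u 1 = y ∧ u N = N * A ∧
    E = ∑ i ∈ Finset.Icc 2 N,
      (Wf (u i - u (i - 1)) - Wf A + h i * (u i - u (i - 1))) }

/-- `inf { J_∞(A;v) : v' ∈ ℓ² }`, where
`J_∞(A;v) = ∑_{i=2}^∞ [W(A + v'_i) - W(A) - W'(A) v'_i + h_i v'_i]`
(the sequence `v i` below stands for the increments `v'_{i+2}`). -/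
def infJinf (Wf : ℝ → ℝ) (h : ℕ → ℝ) (A : ℝ) : ℝ :=
  sInf { E : ℝ | ∃ v : ℕ → ℝ, Summable (fun i => (v i) ^ 2) ∧
    E = ∑' i : ℕ, (Wf (A + v i) - Wf A - deriv Wf A * v i + h (i + 2) * v i) }

/-- Second-order bounds for `f` at `x`: its graph lies between the two parabolas of curvatures
`a` and `b` that touch it at `x` with slope `s`. -/
def HasQuadraticBoundsAt (a b : ℝ) (f : ℝ → ℝ) (s x : ℝ) : Prop :=
  ∀ t, f x + s * t + a / 2 * t ^ 2 ≤ f (x + t) ∧ f (x + t) ≤ f x + s * t + b / 2 * t ^ 2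

/-- Second-order bounds for `f` at every point: for `0 < a` these are the `a`-strongly convex
functions with `b`-Lipschitz derivative. In this form the Legendre transform simply exchanges
`(a, b)` with `(b⁻¹, a⁻¹)`. -/
def HasQuadraticBounds (a b : ℝ) (f : ℝ → ℝ) : Prop :=
  ∀ x, HasQuadraticBoundsAt a b f (deriv f x) x

section QuadraticBounds

variable {a b s x : ℝ} {f : ℝ → ℝ}

lemma HasQuadraticBoundsAt.hasDerivAt (hf : HasQuadraticBoundsAt a b f s x) :
    HasDerivAt f s x := by
  rw [hasDerivAt_iff_isLittleO_nhds_zero]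
  refine Asymptotics.IsBigO.trans_isLittleO (g := fun t : ℝ => t ^ 2) ?_
    (by simpa using Asymptotics.isLittleO_pow_id (𝕜 := ℝ) (n := 2) (by norm_num))
  refine Asymptotics.IsBigO.of_bound ((|a| + |b|) / 2) (Eventually.of_forall fun t => ?_)
  obtain ⟨hlower, hupper⟩ := hf t
  rw [norm_of_nonneg (sq_nonneg t), norm_eq_abs, smul_eq_mul, abs_le]
  constructor <;> nlinarith [neg_abs_le a, le_abs_self b, abs_nonneg a, abs_nonneg b, sq_nonneg t]

lemma HasQuadraticBoundsAt.le (hf : HasQuadraticBoundsAt a b f s x) : a ≤ b := by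
  obtain ⟨hlower, hupper⟩ := hf 1
  linarith

lemma HasQuadraticBoundsAt.apply_le (hf : HasQuadraticBoundsAt a b f 0 x) (ha : 0 ≤ a) (y : ℝ) :
    f x ≤ f y := by
  have hlower := (hf (y - x)).1
  rw [add_sub_cancel] at hlower
  linarith [show 0 ≤ a / 2 * (y - x) ^ 2 by positivity]

lemma HasQuadraticBoundsAt.apply_add_le (hf : HasQuadraticBoundsAt a b f 0 x) (t : ℝ) :
    f (x + t) ≤ f x + b / 2 * t ^ 2 := by
  simpa using (hf t).2

lemma HasQuadraticBoundsAt.abs_sub_apply_le (hf : HasQuadraticBoundsAt a b f 0 x) (ha : 0 ≤ a)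
    (y : ℝ) : |f y - f x| ≤ b / 2 * (y - x) ^ 2 := by
  have hupper := hf.apply_add_le (y - x)
  rw [add_sub_cancel] at hupper
  rw [abs_of_nonneg (sub_nonneg.2 (hf.apply_le ha y))]
  linarith

lemma HasQuadraticBoundsAt.abs_apply_le (hf : HasQuadraticBoundsAt a b f 0 x) (ha : 0 ≤ a)
    (hzero : f 0 = 0) : |f x| ≤ b / 2 * x ^ 2 := by
  simpa [hzero] using hf.abs_sub_apply_le ha 0

lemma HasQuadraticBounds.differentiable (hf : HasQuadraticBounds a b f) : Differentiable ℝ f :=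
  fun x => (hf x).hasDerivAt.differentiableAt

lemma HasQuadraticBounds.le (hf : HasQuadraticBounds a b f) : a ≤ b :=
  (hf 0).le

lemma HasQuadraticBounds.deriv_sub_mul_sub_mem_Icc (hf : HasQuadraticBounds a b f) (x y : ℝ) :
    (deriv f y - deriv f x) * (y - x) ∈ Set.Icc (a * (y - x) ^ 2) (b * (y - x) ^ 2) := by
  have hx := hf x (y - x)
  have hy := hf y (x - y)
  rw [add_sub_cancel] at hx hy
  constructor <;> linarith [hx.1, hx.2, hy.1, hy.2]

lemma HasQuadraticBounds.mul_abs_sub_le_abs_deriv_sub (hf : HasQuadraticBounds a b f) (x y : ℝ) :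
    a * |y - x| ≤ |deriv f y - deriv f x| := by
  rcases (abs_nonneg (y - x)).eq_or_lt with hxy | hxy
  · simp [← hxy]
  · refine le_of_mul_le_mul_right ?_ hxy
    calc a * |y - x| * |y - x| = a * (y - x) ^ 2 := by rw [mul_assoc, abs_mul_abs_self, sq]
      _ ≤ |(deriv f y - deriv f x) * (y - x)| :=
        (hf.deriv_sub_mul_sub_mem_Icc x y).1.trans (le_abs_self _)
      _ = _ := abs_mul _ _

lemma HasQuadraticBounds.surjective_deriv (hf : HasQuadraticBounds a b f) (ha : 0 < a) :
    Function.Surjective (deriv f) := by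
  intro s
  set r := (s - deriv f 0) / a with hr
  have hs : s - deriv f 0 = a * r := by rw [hr, mul_div_cancel₀ _ ha.ne']
  have hconn : (Set.range (deriv f)).OrdConnected := by
    rw [← Set.image_univ]
    exact Set.ordConnected_univ.image_deriv fun x _ => hf.differentiable x
  refine hconn.uIcc_subset ⟨0, rfl⟩ ⟨r, rfl⟩ (Set.mem_uIcc.2 ?_)
  -- strong monotonicity of `deriv f` makes its increment from `0` to `r` at least `a * r` in size
  have hgrowth := (hf.deriv_sub_mul_sub_mem_Icc 0 r).1
  rcases lt_trichotomy r 0 with hneg | hzero | hpos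
  · exact Or.inr ⟨by nlinarith, by nlinarith⟩
  · rw [hzero] at hs ⊢
    exact Or.inl ⟨by linarith, by linarith⟩
  · exact Or.inl ⟨by nlinarith, by nlinarith⟩

lemma HasQuadraticBounds.sub_linear (hf : HasQuadraticBounds a b f) (c : ℝ) :
    HasQuadraticBounds a b fun x => f x - c * x := by
  intro x
  have hslope : deriv (fun x => f x - c * x) x = deriv f x - c := by
    simpa using ((hf x).hasDerivAt.fun_sub ((hasDerivAt_id x).const_mul c)).deriv
  rw [hslope]
  intro t
  obtain ⟨hlower, hupper⟩ := hf x t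
  constructor <;> linarith

lemma add_mul_le_of_convexOn_of_hasDerivAt (hf : ConvexOn ℝ Set.univ f) (hs : HasDerivAt f s x)
    (t : ℝ) : f x + s * t ≤ f (x + t) := by
  rcases lt_trichotomy t 0 with ht | rfl | ht
  · have hslope := hf.slope_le_of_hasDerivAt (Set.mem_univ (x + t)) (Set.mem_univ x)
      (by linarith) hs
    rw [slope_def_field, div_le_iff₀ (by linarith)] at hslope
    linarith
  · simp
  · have hslope := hf.le_slope_of_hasDerivAt (Set.mem_univ x) (Set.mem_univ (x + t))
      (by linarith) hs
    rw [slope_def_field, le_div_iff₀ (by linarith)] at hslope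
    linarith

lemma add_deriv_mul_add_sq_le (hf : Differentiable ℝ f)
    (hmono : Monotone fun x => deriv f x - a * x) (x t : ℝ) :
    f x + deriv f x * t + a / 2 * t ^ 2 ≤ f (x + t) := by
  have hderiv (z : ℝ) : HasDerivAt (fun z => f z - a / 2 * z ^ 2) (deriv f z - a * z) z :=
    ((hf z).hasDerivAt.sub ((hasDerivAt_pow 2 z).const_mul (a / 2))).congr_deriv (by ring)
  have hconv : ConvexOn ℝ Set.univ fun z => f z - a / 2 * z ^ 2 :=
    Monotone.convexOn_univ_of_deriv (fun z => (hderiv z).differentiableAt)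
      (by simpa only [funext fun z => (hderiv z).deriv] using hmono)
  linarith [add_mul_le_of_convexOn_of_hasDerivAt hconv (hderiv x) t]

lemma hasQuadraticBounds_of_deriv2_mem_Icc (hf : Differentiable ℝ f)
    (hf' : Differentiable ℝ (deriv f)) (hbound : ∀ x, deriv (deriv f) x ∈ Set.Icc a b) :
    HasQuadraticBounds a b f := by
  have hlower : Monotone fun x => deriv f x - a * x := fun x y hxy => by
    linarith [mul_sub_le_image_sub_of_le_deriv hf' (fun z => (hbound z).1) hxy]
  have hupper : Monotone fun x => deriv (-f) x - -b * x := fun x y hxy => by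
    simp only [deriv.neg]
    linarith [image_sub_le_mul_sub_of_deriv_le hf' (fun z => (hbound z).2) hxy]
  refine fun x t => ⟨add_deriv_mul_add_sq_le hf hlower x t, ?_⟩
  have hneg := add_deriv_mul_add_sq_le hf.neg hupper x t
  simp only [deriv.neg, Pi.neg_apply] at hneg
  linarith

end QuadraticBounds

section Legendre

variable {a b s x : ℝ} {f : ℝ → ℝ}

/-- The Legendre transform (convex conjugate) of `f`, with the supremum taken in `ℝ`: it is the
junk value `0` at slopes `s` for which `s * x - f x` is unbounded above. -/
def legendre (f : ℝ → ℝ) (s : ℝ) : ℝ :=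
  ⨆ x, (x * s - f x)

lemma HasQuadraticBoundsAt.mul_sub_le (hf : HasQuadraticBoundsAt a b f s x) (ha : 0 < a)
    (t z : ℝ) : z * (s + t) - f z ≤ x * s - f x + x * t + a⁻¹ / 2 * t ^ 2 := by
  have hlower := (hf (z - x)).1
  rw [add_sub_cancel] at hlower
  have hyoung : a⁻¹ / 2 * t ^ 2 + a / 2 * (z - x) ^ 2 - (z - x) * t =
      a⁻¹ / 2 * (t - a * (z - x)) ^ 2 := by
    field_simp
    ring
  have hsq : 0 ≤ a⁻¹ / 2 * (t - a * (z - x)) ^ 2 := by positivity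
  linarith

lemma HasQuadraticBoundsAt.bddAbove_range_mul_sub (hf : HasQuadraticBoundsAt a b f s x)
    (ha : 0 < a) (r : ℝ) : BddAbove (Set.range fun z => z * r - f z) :=
  ⟨_, Set.forall_mem_range.2 fun z => by simpa using hf.mul_sub_le ha (r - s) z⟩

lemma HasQuadraticBoundsAt.legendre_eq (hf : HasQuadraticBoundsAt a b f s x) (ha : 0 < a) :
    legendre f s = x * s - f x :=
  le_antisymm (ciSup_le fun z => by simpa using hf.mul_sub_le ha 0 z)
    (le_ciSup (hf.bddAbove_range_mul_sub ha s) x)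

lemma hasQuadraticBoundsAt_legendre (hf : HasQuadraticBoundsAt a b f s x) (ha : 0 < a)
    (hb : 0 < b) : HasQuadraticBoundsAt b⁻¹ a⁻¹ (legendre f) x s := by
  intro t
  rw [hf.legendre_eq ha]
  refine ⟨?_, ciSup_le fun z => hf.mul_sub_le ha t z⟩
  -- `x + b⁻¹ * t` maximises the lower bound for `z * (s + t) - f z`
  refine le_trans ?_ (le_ciSup (hf.bddAbove_range_mul_sub ha (s + t)) (x + b⁻¹ * t))
  have hupper := (hf (b⁻¹ * t)).2
  have hsq : b / 2 * (b⁻¹ * t) ^ 2 = b⁻¹ / 2 * t ^ 2 := by field_simp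
  linarith

lemma hasQuadraticBounds_legendre (hf : HasQuadraticBounds a b f) (ha : 0 < a) :
    HasQuadraticBounds b⁻¹ a⁻¹ (legendre f) := by
  intro s
  obtain ⟨x, rfl⟩ := hf.surjective_deriv ha s
  have hx := hasQuadraticBoundsAt_legendre (hf x) ha (ha.trans_le hf.le)
  rwa [hx.hasDerivAt.deriv]

end Legendre

section Gibbs

variable {a b : ℝ} {ψ : ℝ → ℝ}

/-- The Gibbs probability measure of the potential `ψ`, with density proportional to
`exp (-ψ)`. -/
def gibbs (ψ : ℝ → ℝ) : Measure ℝ :=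
  volume.tilted fun y => -ψ y

/-- The logarithmic partition function of the potential `ψ` under the external force `σ`. -/
def logPartition (ψ : ℝ → ℝ) (σ : ℝ) : ℝ :=
  log (∫ y, exp (-ψ y + σ * y))

lemma HasQuadraticBounds.integrable_exp_neg (hψ : HasQuadraticBounds a b ψ) (ha : 0 < a) :
    Integrable fun y => exp (-ψ y) := by
  obtain ⟨c, hc⟩ := hψ.surjective_deriv ha 0
  have hgauss : Integrable fun y => exp (-ψ c) * exp (-(a / 2) * (y - c) ^ 2) :=
    ((integrable_exp_neg_mul_sq (half_pos ha)).comp_sub_right c).const_mul _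
  refine hgauss.mono' hψ.differentiable.continuous.neg.rexp.aestronglyMeasurable
    (ae_of_all _ fun y => ?_)
  have hlower := (hψ c (y - c)).1
  rw [add_sub_cancel, hc] at hlower
  rw [norm_of_nonneg (exp_pos _).le, ← exp_add, exp_le_exp]
  linarith

lemma HasQuadraticBounds.integrable_exp_neg_add_mul (hψ : HasQuadraticBounds a b ψ) (ha : 0 < a)
    (σ : ℝ) : Integrable fun y => exp (-ψ y + σ * y) := by
  simpa only [neg_sub', sub_neg_eq_add] using (hψ.sub_linear σ).integrable_exp_neg ha

lemma HasQuadraticBounds.isProbabilityMeasure_gibbs (hψ : HasQuadraticBounds a b ψ) (ha : 0 < a) :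
    IsProbabilityMeasure (gibbs ψ) :=
  isProbabilityMeasure_tilted (hψ.integrable_exp_neg ha)

lemma HasQuadraticBounds.integrableExpSet_gibbs (hψ : HasQuadraticBounds a b ψ) (ha : 0 < a) :
    ProbabilityTheory.integrableExpSet id (gibbs ψ) = Set.univ := by
  refine Set.eq_univ_of_forall fun σ => ?_
  rw [ProbabilityTheory.integrableExpSet, Set.mem_ofPred_eq, gibbs,
    integrable_tilted_iff (hψ.integrable_exp_neg ha)]
  simpa only [id, smul_eq_mul, ← exp_add] using hψ.integrable_exp_neg_add_mul ha σ

lemma HasQuadraticBounds.memLp_id_gibbs (hψ : HasQuadraticBounds a b ψ) (ha : 0 < a) :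
    MemLp id 2 (gibbs ψ) :=
  ProbabilityTheory.memLp_of_mem_interior_integrableExpSet
    (by simp [hψ.integrableExpSet_gibbs ha]) 2

lemma integral_deriv_mul_gibbs {f f' : ℝ → ℝ} (hψ : Differentiable ℝ ψ)
    (hint : Integrable fun y => exp (-ψ y)) (hderiv : ∀ y, HasDerivAt f (f' y) y)
    (hf : Integrable f (gibbs ψ)) (hf' : Integrable f' (gibbs ψ))
    (hψf : Integrable (fun y => deriv ψ y * f y) (gibbs ψ)) :
    ∫ y, deriv ψ y * f y ∂gibbs ψ = ∫ y, f' y ∂gibbs ψ := by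
  have hprod (y : ℝ) : HasDerivAt (fun y => exp (-ψ y) * f y)
      (exp (-ψ y) * f' y - exp (-ψ y) * (deriv ψ y * f y)) y :=
    ((hψ y).hasDerivAt.fun_neg.exp.mul (hderiv y)).congr_deriv (by ring)
  simp only [gibbs, integrable_tilted_iff hint, smul_eq_mul] at hf hf' hψf
  have hparts := integral_eq_zero_of_hasDerivAt_of_integrable hprod (hf'.sub hψf) hf
  rw [integral_sub hf' hψf] at hparts
  simp only [gibbs, integral_tilted, smul_eq_mul, div_mul_eq_mul_div, integral_div]
  rw [sub_eq_zero.1 hparts]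

lemma HasQuadraticBounds.memLp_sub_gibbs (hψ : HasQuadraticBounds a b ψ) (ha : 0 < a) (c : ℝ) :
    MemLp (fun y => y - c) 2 (gibbs ψ) := by
  have := hψ.isProbabilityMeasure_gibbs ha
  exact (hψ.memLp_id_gibbs ha).sub (memLp_const c)

lemma HasQuadraticBounds.integrable_deriv_sub_mul_sub_gibbs (hψ : HasQuadraticBounds a b ψ)
    (ha : 0 < a) (c : ℝ) :
    Integrable (fun y => (deriv ψ y - deriv ψ c) * (y - c)) (gibbs ψ) := by
  refine ((hψ.memLp_sub_gibbs ha c).integrable_sq.const_mul b).mono' ?_ (ae_of_all _ fun y => ?_)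
  · have := measurable_deriv ψ
    fun_prop
  · obtain ⟨hlower, hupper⟩ := hψ.deriv_sub_mul_sub_mem_Icc c y
    rwa [norm_of_nonneg ((by positivity : 0 ≤ a * (y - c) ^ 2).trans hlower)]

lemma HasQuadraticBounds.integral_deriv_sub_mul_sub_gibbs (hψ : HasQuadraticBounds a b ψ)
    (ha : 0 < a) :
    ∫ y, (deriv ψ y - deriv ψ (∫ z, z ∂gibbs ψ)) * (y - ∫ z, z ∂gibbs ψ) ∂gibbs ψ = 1 := by
  have := hψ.isProbabilityMeasure_gibbs ha
  set c := ∫ z, z ∂gibbs ψ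
  have hquad := hψ.integrable_deriv_sub_mul_sub_gibbs ha c
  have hlin := (hψ.memLp_sub_gibbs ha c).integrable one_le_two
  have hmean : ∫ y, (y - c) ∂gibbs ψ = 0 := by
    have hid : Integrable (fun y => y) (gibbs ψ) := (hψ.memLp_id_gibbs ha).integrable one_le_two
    simp [integral_sub hid (integrable_const c), c]
  have hsplit : (fun y => deriv ψ y * (y - c)) =
      fun y => (deriv ψ y - deriv ψ c) * (y - c) + deriv ψ c * (y - c) := by
    funext y
    ring
  have hparts : ∫ y, deriv ψ y * (y - c) ∂gibbs ψ = ∫ _, 1 ∂gibbs ψ :=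
    integral_deriv_mul_gibbs hψ.differentiable (hψ.integrable_exp_neg ha)
      (fun y => (hasDerivAt_id y).sub_const c) hlin (integrable_const 1)
      (hsplit ▸ hquad.add (hlin.const_mul _))
  rw [hsplit, integral_add hquad (hlin.const_mul _), integral_const_mul, hmean] at hparts
  simpa using hparts

lemma HasQuadraticBounds.variance_gibbs_mem_Icc (hψ : HasQuadraticBounds a b ψ) (ha : 0 < a) :
    ProbabilityTheory.variance id (gibbs ψ) ∈ Set.Icc b⁻¹ a⁻¹ := by
  have hb : 0 < b := ha.trans_le hψ.le
  rw [ProbabilityTheory.variance_eq_integral aemeasurable_id]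
  simp only [id]
  set c := ∫ y, y ∂gibbs ψ
  have hsq := (hψ.memLp_sub_gibbs ha c).integrable_sq
  have hquad := hψ.integrable_deriv_sub_mul_sub_gibbs ha c
  have hbounds (y : ℝ) := hψ.deriv_sub_mul_sub_mem_Icc c y
  -- both bounds compare the variance with `∫ y, (ψ' y - ψ' c) * (y - c) = 1`
  have hlower : a * ∫ y, (y - c) ^ 2 ∂gibbs ψ ≤ 1 := by
    rw [← hψ.integral_deriv_sub_mul_sub_gibbs ha, ← integral_const_mul]
    exact integral_mono (hsq.const_mul a) hquad fun y => (hbounds y).1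
  have hupper : 1 ≤ b * ∫ y, (y - c) ^ 2 ∂gibbs ψ := by
    rw [← hψ.integral_deriv_sub_mul_sub_gibbs ha, ← integral_const_mul]
    exact integral_mono hquad (hsq.const_mul b) fun y => (hbounds y).2
  exact ⟨(inv_le_iff_one_le_mul₀' hb).2 hupper, by rwa [← mul_one a⁻¹, le_inv_mul_iff₀ ha]⟩

lemma HasQuadraticBounds.logPartition_eq (hψ : HasQuadraticBounds a b ψ) (ha : 0 < a) (σ : ℝ) :
    logPartition ψ σ = ProbabilityTheory.cgf id (gibbs ψ) σ + log (∫ y, exp (-ψ y)) := by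
  have hZ := integral_exp_pos (hψ.integrable_exp_neg ha)
  have hZσ := integral_exp_pos (hψ.integrable_exp_neg_add_mul ha σ)
  rw [ProbabilityTheory.cgf, ProbabilityTheory.mgf, gibbs, integral_exp_tilted]
  simp only [Pi.add_apply, id]
  rw [log_div hZσ.ne' hZ.ne', sub_add_cancel, logPartition]

lemma HasQuadraticBounds.gibbs_tilted_mul (hψ : HasQuadraticBounds a b ψ) (ha : 0 < a) (σ : ℝ) :
    (gibbs ψ).tilted (fun y => σ * y) = gibbs fun y => ψ y - σ * y := by
  rw [gibbs, tilted_tilted (hψ.integrable_exp_neg ha), gibbs]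
  congr 1
  funext y
  simp only [Pi.add_apply]
  ring

lemma hasQuadraticBounds_logPartition (hψ : HasQuadraticBounds a b ψ) (ha : 0 < a) :
    HasQuadraticBounds b⁻¹ a⁻¹ (logPartition ψ) := by
  have hmem (σ : ℝ) : σ ∈ interior (ProbabilityTheory.integrableExpSet id (gibbs ψ)) := by
    simp [hψ.integrableExpSet_gibbs ha]
  have hanalytic (σ : ℝ) : AnalyticAt ℝ (ProbabilityTheory.cgf id (gibbs ψ)) σ :=
    ProbabilityTheory.analyticAt_cgf (hmem σ)
  have hderiv : deriv (logPartition ψ) = deriv (ProbabilityTheory.cgf id (gibbs ψ)) := by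
    funext σ
    rw [funext (hψ.logPartition_eq ha), deriv_add_const]
  refine hasQuadraticBounds_of_deriv2_mem_Icc ?_ ?_ fun σ => ?_
  · rw [funext (hψ.logPartition_eq ha)]
    exact fun σ => (hanalytic σ).differentiableAt.add_const _
  · rw [hderiv]
    exact fun σ => (hanalytic σ).deriv.differentiableAt
  · rw [hderiv, ← iteratedDeriv_one, ← iteratedDeriv_succ',
      ← ProbabilityTheory.variance_tilted_mul (hmem σ)]
    simp only [id, hψ.gibbs_tilted_mul ha]
    exact (hψ.sub_linear σ).variance_gibbs_mem_Icc ha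

lemma W_eq_legendre_logPartition (ψ : ℝ → ℝ) : W ψ = legendre (logPartition ψ) :=
  rfl

lemma hasQuadraticBounds_W (hψ : HasQuadraticBounds a b ψ) (ha : 0 < a) :
    HasQuadraticBounds a b (W ψ) := by
  rw [W_eq_legendre_logPartition]
  simpa only [inv_inv] using hasQuadraticBounds_legendre (hasQuadraticBounds_logPartition hψ ha)
    (inv_pos.2 (ha.trans_le hψ.le))

end Gibbs

section DecoupledMinimisation

variable {ι : Type*} {a b : ℝ} {e : ι → ℝ → ℝ} {v w : ι → ℝ}

lemma summable_apply_of_hasQuadraticBoundsAt (ha : 0 ≤ a)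
    (he : ∀ j, HasQuadraticBoundsAt a b (e j) 0 (w j)) (hzero : ∀ j, e j 0 = 0)
    (hw : Summable fun j => w j ^ 2) (hv : Summable fun j => v j ^ 2) :
    Summable fun j => e j (v j) := by
  refine .of_norm_bounded (((hv.mul_left 2).add (hw.mul_left 3)).mul_left (b / 2)) fun j => ?_
  have hb : 0 ≤ b := ha.trans (he j).le
  calc |e j (v j)| = |(e j (v j) - e j (w j)) + e j (w j)| := by rw [sub_add_cancel]
    _ ≤ b / 2 * (v j - w j) ^ 2 + b / 2 * w j ^ 2 :=
      (abs_add_le _ _).trans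
        (add_le_add ((he j).abs_sub_apply_le ha (v j)) ((he j).abs_apply_le ha (hzero j)))
    _ = b / 2 * ((v j - w j) ^ 2 + w j ^ 2) := by ring
    _ ≤ b / 2 * (2 * v j ^ 2 + 3 * w j ^ 2) :=
      mul_le_mul_of_nonneg_left (by linarith [sq_nonneg (v j + w j)]) (by positivity)

lemma abs_tsum_apply_le_of_hasQuadraticBoundsAt (ha : 0 ≤ a)
    (he : ∀ j, HasQuadraticBoundsAt a b (e j) 0 (w j)) (hzero : ∀ j, e j 0 = 0)
    (hw : Summable fun j => w j ^ 2) :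
    |∑' j, e j (w j)| ≤ b / 2 * ∑' j, w j ^ 2 := by
  rw [← norm_eq_abs]
  exact tsum_of_norm_bounded (hw.hasSum.mul_left (b / 2)) fun j => (he j).abs_apply_le ha (hzero j)

lemma isLeast_tsum_of_hasQuadraticBoundsAt (ha : 0 ≤ a)
    (he : ∀ j, HasQuadraticBoundsAt a b (e j) 0 (w j)) (hzero : ∀ j, e j 0 = 0)
    (hw : Summable fun j => w j ^ 2) :
    IsLeast {E | ∃ v : ι → ℝ, (Summable fun j => v j ^ 2) ∧ E = ∑' j, e j (v j)}
      (∑' j, e j (w j)) := by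
  refine ⟨⟨w, hw, rfl⟩, ?_⟩
  rintro _ ⟨v, hv, rfl⟩
  exact Summable.tsum_le_tsum (fun j => (he j).apply_le ha (v j))
    (summable_apply_of_hasQuadraticBoundsAt ha he hzero hw hw)
    (summable_apply_of_hasQuadraticBoundsAt ha he hzero hw hv)

lemma exists_sum_eq_and_sum_apply_le (he : ∀ j, HasQuadraticBoundsAt a b (e j) 0 (w j))
    {s : Finset ι} (hs : s.Nonempty) (B : ℝ) :
    ∃ v : ι → ℝ, ∑ j ∈ s, v j = B ∧
      ∑ j ∈ s, e j (v j) ≤ ∑ j ∈ s, e j (w j) + b / 2 * (B - ∑ j ∈ s, w j) ^ 2 / s.card := by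
  have hcard : (s.card : ℝ) ≠ 0 := Nat.cast_ne_zero.2 hs.card_ne_zero
  -- the deficit of `w` is spread evenly over `s`
  set t := (B - ∑ j ∈ s, w j) / s.card with ht
  refine ⟨fun j => w j + t, ?_, ?_⟩
  · rw [Finset.sum_add_distrib, Finset.sum_const, nsmul_eq_mul, ht, mul_div_cancel₀ _ hcard,
      add_sub_cancel]
  · calc ∑ j ∈ s, e j (w j + t) ≤ ∑ j ∈ s, (e j (w j) + b / 2 * t ^ 2) :=
        Finset.sum_le_sum fun j _ => (he j).apply_add_le t
      _ = ∑ j ∈ s, e j (w j) + b / 2 * (B - ∑ j ∈ s, w j) ^ 2 / s.card := by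
        rw [Finset.sum_add_distrib, Finset.sum_const, nsmul_eq_mul, ht]
        field_simp

end DecoupledMinimisation

section Chain

variable {a b A y : ℝ} {f : ℝ → ℝ} {h : ℕ → ℝ}

/-- The energy of one bond with increment `A + v` under the force `c`, without its part that is
affine in the strain: the summand of `J_∞`. -/
def bondEnergy (f : ℝ → ℝ) (A c v : ℝ) : ℝ :=
  f (A + v) - f A - deriv f A * v + c * v

lemma bondEnergy_zero (f : ℝ → ℝ) (A c : ℝ) : bondEnergy f A c 0 = 0 := by
  simp [bondEnergy]

lemma HasQuadraticBounds.exists_bondEnergy_minimiser (hf : HasQuadraticBounds a b f) (ha : 0 < a)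
    (A c : ℝ) : ∃ w, |w| ≤ |c| / a ∧ HasQuadraticBoundsAt a b (bondEnergy f A c) 0 w := by
  obtain ⟨z, hz⟩ := hf.surjective_deriv ha (deriv f A - c)
  refine ⟨z - A, ?_, fun t => ?_⟩
  · have hmono := hf.mul_abs_sub_le_abs_deriv_sub A z
    rw [hz, sub_sub_cancel_left, abs_neg] at hmono
    rwa [le_div_iff₀' ha]
  · obtain ⟨hlower, hupper⟩ := hf z t
    simp only [bondEnergy, ← add_assoc, add_sub_cancel]
    rw [hz] at hlower hupper
    constructor <;> linarith

lemma sum_Icc_two_eq_sum_range (g : ℕ → ℝ) (n : ℕ) :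
    ∑ i ∈ Finset.Icc 2 (n + 1), g i = ∑ j ∈ Finset.range n, g (j + 2) := by
  rw [← Finset.Ico_add_one_right_eq_Icc, Finset.sum_Ico_eq_sum_range,
    show n + 1 + 1 - 2 = n by lia]
  simp only [add_comm]

lemma sum_energy_eq_add_sum_bondEnergy {n : ℕ} {v : ℕ → ℝ}
    (hv : ∑ j ∈ Finset.range n, v j = A - y) :
    ∑ j ∈ Finset.range n, (f (A + v j) - f A + h (j + 2) * (A + v j)) =
      (A - y) * deriv f A + A * (∑ j ∈ Finset.range n, h (j + 2)) +
        ∑ j ∈ Finset.range n, bondEnergy f A (h (j + 2)) (v j) := by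
  rw [← hv, Finset.sum_mul, Finset.mul_sum, ← Finset.sum_add_distrib, ← Finset.sum_add_distrib]
  refine Finset.sum_congr rfl fun j _ => ?_
  rw [bondEnergy]
  ring

/-- In terms of the increments `A + v j`, `j < n`, of a chain with `N = n + 1` atoms, the two
boundary conditions become `∑ v j = A - y`. -/
lemma EcgNF_succ_eq (f : ℝ → ℝ) (h : ℕ → ℝ) (n : ℕ) (A y : ℝ) :
    EcgNF f h (n + 1) A y = sInf {E | ∃ v : ℕ → ℝ, ∑ j ∈ Finset.range n, v j = A - y ∧
      E = (A - y) * deriv f A + A * (∑ j ∈ Finset.range n, h (j + 2)) +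
        ∑ j ∈ Finset.range n, bondEnergy f A (h (j + 2)) (v j)} := by
  unfold EcgNF
  congr 1
  ext E
  simp only [Set.mem_ofPred_eq, sum_Icc_two_eq_sum_range]
  constructor
  · rintro ⟨u, hu_one, hu_last, rfl⟩
    have hv : ∑ j ∈ Finset.range n, (u (j + 2) - u (j + 1) - A) = A - y := by
      rw [Finset.sum_sub_distrib, Finset.sum_range_sub (fun j => u (j + 1)), hu_last, zero_add,
        hu_one, Finset.sum_const, Finset.card_range, nsmul_eq_mul]
      push_cast
      ring
    refine ⟨_, hv, ?_⟩
    simp only [← sum_energy_eq_add_sum_bondEnergy hv, add_sub_cancel]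
    rfl
  · rintro ⟨v, hv, rfl⟩
    refine ⟨fun k => y + ∑ j ∈ Finset.range (k - 1), (A + v j), by simp, ?_, ?_⟩
    · simp only [add_tsub_cancel_right, Finset.sum_add_distrib, hv, Finset.sum_const,
        Finset.card_range, nsmul_eq_mul]
      push_cast
      ring
    · rw [← sum_energy_eq_add_sum_bondEnergy hv]
      refine Finset.sum_congr rfl fun j _ => ?_
      simp [Finset.sum_range_succ]

lemma EcgNF_succ_sub_mem_Icc {w : ℕ → ℝ} {n : ℕ} (hn : n ≠ 0) (ha : 0 ≤ a)
    (hw : ∀ j, HasQuadraticBoundsAt a b (bondEnergy f A (h (j + 2))) 0 (w j)) :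
    EcgNF f h (n + 1) A y - ((A - y) * deriv f A + A * (∑ j ∈ Finset.range n, h (j + 2)) +
        ∑ j ∈ Finset.range n, bondEnergy f A (h (j + 2)) (w j)) ∈
      Set.Icc 0 (b / 2 * (A - y - ∑ j ∈ Finset.range n, w j) ^ 2 / n) := by
  obtain ⟨v, hv, hcost⟩ :=
    exists_sum_eq_and_sum_apply_le hw (Finset.nonempty_range_iff.2 hn) (A - y)
  rw [Finset.card_range] at hcost
  rw [EcgNF_succ_eq]
  set energies := {E | ∃ v : ℕ → ℝ, ∑ j ∈ Finset.range n, v j = A - y ∧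
    E = (A - y) * deriv f A + A * (∑ j ∈ Finset.range n, h (j + 2)) +
      ∑ j ∈ Finset.range n, bondEnergy f A (h (j + 2)) (v j)}
  have hmem : (A - y) * deriv f A + A * (∑ j ∈ Finset.range n, h (j + 2)) +
      ∑ j ∈ Finset.range n, bondEnergy f A (h (j + 2)) (v j) ∈ energies := ⟨v, hv, rfl⟩
  have hlower : (A - y) * deriv f A + A * (∑ j ∈ Finset.range n, h (j + 2)) +
      ∑ j ∈ Finset.range n, bondEnergy f A (h (j + 2)) (w j) ∈ lowerBounds energies := by
    rintro _ ⟨u, -, rfl⟩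
    gcongr with j
    exact (hw j).apply_le ha (u j)
  constructor
  · linarith [le_csInf ⟨_, hmem⟩ hlower]
  · linarith [csInf_le ⟨_, hlower⟩ hmem]

lemma infJinf_eq_tsum_bondEnergy {w : ℕ → ℝ} (ha : 0 ≤ a)
    (hw : ∀ j, HasQuadraticBoundsAt a b (bondEnergy f A (h (j + 2))) 0 (w j))
    (hsum : Summable fun j => w j ^ 2) :
    infJinf f h A = ∑' j, bondEnergy f A (h (j + 2)) (w j) :=
  (isLeast_tsum_of_hasQuadraticBoundsAt ha hw (fun _ => bondEnergy_zero f A _) hsum).csInf_eq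

end Chain

section Limit

variable {a b A y : ℝ} {f : ℝ → ℝ} {h w : ℕ → ℝ} {n : ℕ}

lemma summable_sq_of_summable_abs {ι : Type*} {g : ι → ℝ} (hg : Summable fun i => |g i|) :
    Summable fun i => g i ^ 2 := by
  have hg_one : Memℓp g 1 := memℓp_gen (by simpa using hg)
  simpa using (hg_one.of_exponent_ge one_le_two).summable (by norm_num)

lemma tsum_sq_le_of_abs_le_div {ι : Type*} {g w : ι → ℝ} (hwg : ∀ i, |w i| ≤ |g i| / a)
    (hg : Summable fun i => g i ^ 2) : ∑' i, w i ^ 2 ≤ (∑' i, g i ^ 2) / a ^ 2 := by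
  have hle (i : ι) : w i ^ 2 ≤ g i ^ 2 / a ^ 2 := by
    rw [← sq_abs, ← sq_abs (g i), ← div_pow]
    exact pow_le_pow_left₀ (abs_nonneg _) (hwg i) 2
  have hg_div := hg.div_const (a ^ 2)
  rw [← tsum_div_const]
  exact Summable.tsum_le_tsum hle (.of_nonneg_of_le (fun i => sq_nonneg _) hle hg_div) hg_div

lemma natCast_inv_le_two_mul_inv_succ (hn : n ≠ 0) : (n : ℝ)⁻¹ ≤ 2 * (↑(n + 1) : ℝ)⁻¹ := by
  have hn_one : (1 : ℝ) ≤ n := Nat.one_le_cast.2 (Nat.one_le_iff_ne_zero.2 hn)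
  rw [← div_eq_mul_inv, inv_le_comm₀ (by positivity) (by positivity), inv_div, Nat.cast_succ]
  linarith

lemma mul_add_mul_add_mul_le {p q r t u v : ℝ} (hp : 0 ≤ p) (hq : 0 ≤ q) (hr : 0 ≤ r)
    (ht : 0 ≤ t) (hu : 0 ≤ u) (hv : 0 ≤ v) :
    p * t + q * u + r * v ≤ (p + q + r) * (t + u + v) := by
  rw [mul_add, mul_add]
  gcongr <;> linarith

/-- The limiting energy `E^cg(A,y)` of the infinite chain with bond energy `f`. -/
def ecgLimit (f : ℝ → ℝ) (h : ℕ → ℝ) (A y : ℝ) : ℝ :=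
  (A - y) * deriv f A + A * (∑' i : ℕ, h (i + 2)) + infJinf f h A

/-- The error scale of the finite-domain approximation with `N` atoms: a boundary-layer term and
the linear and quadratic contributions of the forces beyond atom `N`. -/
def ecgErrorScale (h : ℕ → ℝ) (A : ℝ) (N : ℕ) : ℝ :=
  (N : ℝ)⁻¹ + |A| * |∑' i : ℕ, h (i + N + 1)| + ∑' i : ℕ, (h (i + N + 1)) ^ 2

lemma ecgErrorScale_succ (h : ℕ → ℝ) (A : ℝ) (n : ℕ) :
    ecgErrorScale h A (n + 1) =
      (↑(n + 1) : ℝ)⁻¹ + |A| * |∑' i, h (i + n + 2)| + ∑' i, h (i + n + 2) ^ 2 :=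
  rfl

lemma tendsto_ecgErrorScale (h : ℕ → ℝ) (A : ℝ) :
    Tendsto (ecgErrorScale h A) atTop (nhds 0) := by
  have htail (g : ℕ → ℝ) : Tendsto (fun N => ∑' i, g (i + N + 1)) atTop (nhds 0) := by
    simpa only [← add_assoc] using (tendsto_add_atTop_iff_nat 1).2 (tendsto_sum_nat_add g)
  unfold ecgErrorScale
  simpa using ((tendsto_inv_atTop_nhds_zero_nat (𝕜 := ℝ)).add
    ((htail h).abs.const_mul |A|)).add (htail fun i => h i ^ 2)

lemma abs_partial_sum_sub_ecgLimit_le (ha : 0 ≤ a)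
    (hw : ∀ j, HasQuadraticBoundsAt a b (bondEnergy f A (h (j + 2))) 0 (w j))
    (hw_sq : Summable fun j => w j ^ 2) (hh : Summable h) (n : ℕ) :
    |(A - y) * deriv f A + A * (∑ j ∈ Finset.range n, h (j + 2)) +
        ∑ j ∈ Finset.range n, bondEnergy f A (h (j + 2)) (w j) - ecgLimit f h A y| ≤
      |A| * |∑' i, h (i + n + 2)| + b / 2 * ∑' i, w (i + n) ^ 2 := by
  have henergy := summable_apply_of_hasQuadraticBoundsAt ha hw (fun _ => bondEnergy_zero f A _)
    hw_sq hw_sq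
  rw [ecgLimit, infJinf_eq_tsum_bondEnergy ha hw hw_sq, ← henergy.sum_add_tsum_nat_add n,
    ← ((summable_nat_add_iff 2).2 hh).sum_add_tsum_nat_add n]
  calc _ = |A * (∑' i, h (i + n + 2)) + ∑' i, bondEnergy f A (h (i + n + 2)) (w (i + n))| := by
        rw [← abs_neg]
        congr 1
        ring
    _ ≤ |A| * |∑' i, h (i + n + 2)| + b / 2 * ∑' i, w (i + n) ^ 2 := by
        rw [← abs_mul]
        refine (abs_add_le _ _).trans (add_le_add_right ?_ _)
        exact abs_tsum_apply_le_of_hasQuadraticBoundsAt ha (fun i => hw (i + n))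
          (fun _ => bondEnergy_zero f A _) ((summable_nat_add_iff n).2 hw_sq)

lemma abs_EcgNF_succ_sub_ecgLimit_le (hn : n ≠ 0) (ha : 0 ≤ a)
    (hw : ∀ j, HasQuadraticBoundsAt a b (bondEnergy f A (h (j + 2))) 0 (w j))
    (hw_abs : Summable fun j => |w j|) (hh : Summable h) :
    |EcgNF f h (n + 1) A y - ecgLimit f h A y| ≤
      b / 2 * (|A - y| + ∑' j, |w j|) ^ 2 / n +
        (|A| * |∑' i, h (i + n + 2)| + b / 2 * ∑' i, w (i + n) ^ 2) := by
  have hb : 0 ≤ b := ha.trans (hw 0).le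
  have hboundary := EcgNF_succ_sub_mem_Icc (y := y) hn ha hw
  have hdeficit : |A - y - ∑ j ∈ Finset.range n, w j| ≤ |A - y| + ∑' j, |w j| :=
    (abs_sub _ _).trans (add_le_add_right ((Finset.abs_sum_le_sum_abs _ _).trans
      (hw_abs.sum_le_tsum _ fun _ _ => abs_nonneg _)) _)
  refine (abs_sub_le _ _ _).trans (add_le_add ?_
    (abs_partial_sum_sub_ecgLimit_le ha hw (summable_sq_of_summable_abs hw_abs) hh n))
  rw [abs_of_nonneg hboundary.1]
  refine hboundary.2.trans ?_
  rw [← sq_abs]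
  gcongr

lemma HasQuadraticBounds.exists_abs_EcgNF_sub_ecgLimit_le (hf : HasQuadraticBounds a b f)
    (ha : 0 < a) (hh : Summable fun i => |h i|) (A y : ℝ) :
    ∃ C > 0, ∀ N : ℕ, 2 ≤ N →
      |EcgNF f h N A y - ecgLimit f h A y| ≤ C * ecgErrorScale h A N := by
  choose w hw_le hw using fun j => hf.exists_bondEnergy_minimiser ha A (h (j + 2))
  have hb : 0 ≤ b := ha.le.trans hf.le
  have hw_abs : Summable fun j => |w j| :=
    .of_nonneg_of_le (fun _ => abs_nonneg _) hw_le (((summable_nat_add_iff 2).2 hh).div_const a)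
  set S := |A - y| + ∑' j, |w j|
  refine ⟨b * S ^ 2 + 1 + b / 2 / a ^ 2, by positivity, fun N hN => ?_⟩
  obtain ⟨n, rfl⟩ : ∃ n, N = n + 1 := ⟨N - 1, by lia⟩
  have hn : n ≠ 0 := by lia
  have hh_sq : Summable fun i => h (i + n + 2) ^ 2 :=
    (summable_nat_add_iff (f := fun i => h i ^ 2) (n + 2)).2 (summable_sq_of_summable_abs hh)
  have hw_tail := tsum_sq_le_of_abs_le_div (fun i => hw_le (i + n)) hh_sq
  calc |EcgNF f h (n + 1) A y - ecgLimit f h A y|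
      ≤ b / 2 * S ^ 2 / n + (|A| * |∑' i, h (i + n + 2)| + b / 2 * ∑' i, w (i + n) ^ 2) :=
        abs_EcgNF_succ_sub_ecgLimit_le hn ha.le hw hw_abs hh.of_abs
    _ ≤ b / 2 * S ^ 2 * (2 * (↑(n + 1) : ℝ)⁻¹) + (|A| * |∑' i, h (i + n + 2)| +
          b / 2 * ((∑' i, h (i + n + 2) ^ 2) / a ^ 2)) := by
        rw [div_eq_mul_inv]
        gcongr
        exact natCast_inv_le_two_mul_inv_succ hn
    _ = b * S ^ 2 * (↑(n + 1) : ℝ)⁻¹ + 1 * (|A| * |∑' i, h (i + n + 2)|) +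
          b / 2 / a ^ 2 * ∑' i, h (i + n + 2) ^ 2 := by ring
    _ ≤ (b * S ^ 2 + 1 + b / 2 / a ^ 2) * ecgErrorScale h A (n + 1) := by
        rw [ecgErrorScale_succ]
        exact mul_add_mul_add_mul_le (by positivity) zero_le_one (by positivity) (by positivity)
          (by positivity) (tsum_nonneg fun _ => sq_nonneg _)

end Limit

theorem coarse_grained_energy_limit_with_forces_general {a b : ℝ} {f : ℝ → ℝ} (ha : 0 < a)
    (hf : HasQuadraticBounds a b f) {h : ℕ → ℝ} (hh : Summable fun i => |h i|) (A y : ℝ) :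
    Tendsto (fun N => EcgNF f h N A y) atTop (nhds (ecgLimit f h A y)) ∧
      ∃ C > 0, ∀ N : ℕ, 2 ≤ N →
        |EcgNF f h N A y - ecgLimit f h A y| ≤ C * ecgErrorScale h A N := by
  obtain ⟨C, hC, hrate⟩ := hf.exists_abs_EcgNF_sub_ecgLimit_le ha hh A y
  refine ⟨tendsto_iff_norm_sub_tendsto_zero.2 ?_, C, hC, hrate⟩
  refine squeeze_zero' (.of_forall fun _ => norm_nonneg _) ?_
    (by simpa using (tendsto_ecgErrorScale h A).const_mul C)
  filter_upwards [eventually_ge_atTop 2] with N hN using hrate N hN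

/-- limit of the coarse-grained energy with external forces, with rate. -/
theorem coarse_grained_energy_limit_with_forces
    (ψ : ℝ → ℝ) (κ₁ κ₂ : ℝ)
    (hψ : ContDiff ℝ 2 ψ) (hκ₁ : 0 < κ₁) (hκ : κ₁ ≤ κ₂)
    (hψ'' : ∀ y : ℝ, κ₁ ≤ deriv (deriv ψ) y ∧ deriv (deriv ψ) y ≤ κ₂)
    (h : ℕ → ℝ) (hh : Summable fun i => |h i|)
    (A y : ℝ) :
    Tendsto (fun N : ℕ => EcgNF (W ψ) h N A y) atTop
      (nhds ((A - y) * deriv (W ψ) A + A * (∑' i : ℕ, h (i + 2)) +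
        infJinf (W ψ) h A)) ∧
    ∃ C > 0, ∀ N : ℕ, 2 ≤ N →
      |EcgNF (W ψ) h N A y -
        ((A - y) * deriv (W ψ) A + A * (∑' i : ℕ, h (i + 2)) + infJinf (W ψ) h A)| ≤
      C * ((N : ℝ)⁻¹ + |A| * |∑' i : ℕ, h (i + N + 1)| + ∑' i : ℕ, (h (i + N + 1)) ^ 2) := by
  have hψ_bounds : HasQuadraticBounds κ₁ κ₂ ψ :=
    hasQuadraticBounds_of_deriv2_mem_Icc (hψ.differentiable two_ne_zero)
      hψ.differentiable_deriv_two hψ''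
  exact coarse_grained_energy_limit_with_forces_general hκ₁ (hasQuadraticBounds_W hψ_bounds hκ₁)
    hh A y
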